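/- Let ŵ(x) = ω(x/|x|) be a nonconstant S¹-equivariant tangent map induced by a smooth S¹-equivariant harmonic sphere ω = (ω₀,ω₁,ω₂): S² → S⁴, and suppose the range of ŵ is not contained in the unit sphere of ℝ⊕ℂ⊕{0} (equivalently, ω₂ is not identically zero). Then ŵ is unstable: there exists an S¹-equivariant vector field X ∈ C_c^∞(ℝ³∖{0}; ℝ⊕ℂ⊕ℂ) such that δ²E₀(ŵ)[X] < 0. -/

import Mathlib

noncomputable section

open MeasureTheory
open scoped Classical

abbrev E3 : Type := EuclideanSpace ℝ (Fin 3)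

abbrev V5 : Type := ℝ × ℂ × ℂ

/-- Squared Euclidean norm on ℝ ⊕ ℂ ⊕ ℂ. -/
def nsq (p : V5) : ℝ := p.1 ^ 2 + Complex.normSq p.2.1 + Complex.normSq p.2.2

/-- Real inner product on ℝ ⊕ ℂ ⊕ ℂ. -/
def vdot (p q : V5) : ℝ :=
  p.1 * q.1 + (p.2.1 * (starRingEnd ℂ) q.2.1).re + (p.2.2 * (starRingEnd ℂ) q.2.2).re

/-- The circle action R_α · (t, ζ₁, ζ₂) = (t, e^{iα}ζ₁, e^{2iα}ζ₂) on ℝ ⊕ ℂ ⊕ ℂ. -/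
def circAct (α : ℝ) (p : V5) : V5 :=
  (p.1, Complex.exp (Complex.I * (α : ℂ)) * p.2.1,
    Complex.exp (2 * Complex.I * (α : ℂ)) * p.2.2)

/-- Rotation of ℝ³ by angle α about the x₃-axis. -/
def rot3 (α : ℝ) (x : E3) : E3 :=
  EuclideanSpace.single (0 : Fin 3) (Real.cos α * x 0 - Real.sin α * x 1) +
    EuclideanSpace.single (1 : Fin 3) (Real.sin α * x 0 + Real.cos α * x 1) +
    EuclideanSpace.single (2 : Fin 3) (x 2)

/-- The unit sphere S² ⊂ ℝ³. -/
def sphere2 : Set E3 := Metric.sphere (0 : E3) 1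

def northPole : E3 := EuclideanSpace.single (2 : Fin 3) (1 : ℝ)

def southPole : E3 := EuclideanSpace.single (2 : Fin 3) (-1 : ℝ)

/-- Degree-zero homogeneous extension of a map defined on the sphere. -/
def homExt (ω : E3 → V5) : E3 → V5 := fun x => ω (‖x‖⁻¹ • x)

def homExtR (g : E3 → ℝ) : E3 → ℝ := fun x => g (‖x‖⁻¹ • x)

/-- Squared Euclidean norm of the differential. -/
def gradSq (f : E3 → V5) (x : E3) : ℝ :=
  ∑ i : Fin 3, nsq (fderiv ℝ f x (EuclideanSpace.single i (1 : ℝ)))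

def gradSqR (f : E3 → ℝ) (x : E3) : ℝ :=
  ∑ i : Fin 3, fderiv ℝ f x (EuclideanSpace.single i (1 : ℝ)) ^ 2

/-- Componentwise Euclidean Laplacian. -/
def lap (f : E3 → V5) (x : E3) : V5 :=
  ∑ i : Fin 3,
    fderiv ℝ (fun y => fderiv ℝ f y (EuclideanSpace.single i (1 : ℝ))) x
      (EuclideanSpace.single i (1 : ℝ))

/-- ω : S² → S⁴ is a (smooth) harmonic sphere: it maps the sphere into the unit
sphere of ℝ ⊕ ℂ ⊕ ℂ, its degree-zero homogeneous extension Q is smooth away from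
the origin, and ΔQ + |∇Q|²Q = 0 on ℝ³ ∖ {0}. -/
def IsHarmonicSphere (ω : E3 → V5) : Prop :=
  (∀ x ∈ sphere2, nsq (ω x) = 1) ∧
    ContDiffOn ℝ (⊤ : ℕ∞) (homExt ω) {(0 : E3)}ᶜ ∧
    ∀ x : E3, x ≠ 0 → lap (homExt ω) x + gradSq (homExt ω) x • homExt ω x = 0

/-- S¹-equivariance of a sphere map. -/
def EquivariantS (ω : E3 → V5) : Prop :=
  ∀ α : ℝ, ∀ x ∈ sphere2, ω (rot3 α x) = circAct α (ω x)

/-- S¹-equivariance of a vector field on ℝ³. -/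
def EquivariantV (X : E3 → V5) : Prop :=
  ∀ (α : ℝ) (x : E3), X (rot3 α x) = circAct α (X x)

/-- Tangential part X_T = X - (w·X)w. -/
def tangPart (w X : E3 → V5) : E3 → V5 := fun x => X x - vdot (w x) (X x) • w x

/-- Second variation δ²E₀(w)[X] = ∫ (|∇X_T|² - |∇w|²|X_T|²). -/
def secondVar (w X : E3 → V5) : ℝ :=
  ∫ x : E3, (gradSq (tangPart w X) x - gradSq w x * nsq (tangPart w X x))

/-- Stability of a tangent map within the S¹-equivariant class. -/
def IsStable (w : E3 → V5) : Prop :=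
  ∀ X : E3 → V5, ContDiff ℝ (⊤ : ℕ∞) X → HasCompactSupport X → EquivariantV X →
    0 ≤ secondVar w X

def conj' (z : ℂ) : ℂ := (starRingEnd ℂ) z

/-- The twistor fibration, in homogeneous coordinates on ℂ⁴ ∖ {0}. -/
def tau4 (w0 w1 w2 w3 : ℂ) : V5 :=
  ((Complex.normSq w0 + Complex.normSq w3 - Complex.normSq w1 - Complex.normSq w2) /
      (Complex.normSq w0 + Complex.normSq w1 + Complex.normSq w2 + Complex.normSq w3),
    2 * (conj' w0 * w1 + conj' w2 * w3) /
      ((Complex.normSq w0 + Complex.normSq w1 + Complex.normSq w2 + Complex.normSq w3 : ℝ) : ℂ),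
    2 * (conj' w0 * w2 - conj' w1 * w3) /
      ((Complex.normSq w0 + Complex.normSq w1 + Complex.normSq w2 + Complex.normSq w3 : ℝ) : ℂ))

/-- Inverse stereographic projection ℂ → S² (from the south pole). -/
def stInv (z : ℂ) : E3 :=
  EuclideanSpace.single (0 : Fin 3) (2 * z.re / (1 + Complex.normSq z)) +
    EuclideanSpace.single (1 : Fin 3) (2 * z.im / (1 + Complex.normSq z)) +
    EuclideanSpace.single (2 : Fin 3) ((1 - Complex.normSq z) / (1 + Complex.normSq z))

/-- Equatorial embedding ω_eq^{(1)}(x) = (x₃, x₁ + ix₂, 0). -/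
def omegaEq1 (x : E3) : V5 := (x 2, (x 0 : ℂ) + (x 1 : ℂ) * Complex.I, 0)

/-- Equatorial embedding ω_eq^{(2)}(x) = (x₃, 0, x₁ + ix₂). -/
def omegaEq2 (x : E3) : V5 := (x 2, 0, (x 0 : ℂ) + (x 1 : ℂ) * Complex.I)

/-- The horizontal algebraic curve composed with the twistor fibration. -/
def liftCurve (μ1 μ2 z0 z1 : ℂ) : V5 :=
  tau4 (z0 ^ 3) (μ1 * z0 ^ 2 * z1) (μ2 * z0 * z1 ^ 2) (-(μ1 * μ2 / 3) * z1 ^ 3)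

/-- The explicit two-parameter family ω_{μ₁,μ₂} of equivariant harmonic spheres,
as a map defined on S² via the identification [z₀, z₁] ↦ σ₂⁻¹(z₁/z₀). -/
def omegaFam (μ1 μ2 : ℂ) (x : E3) : V5 :=
  if x = southPole then
    if μ1 = 0 ∧ μ2 = 0 then ((1 : ℝ), 0, 0)
    else if μ1 ≠ 0 ∧ μ2 ≠ 0 then liftCurve μ1 μ2 0 1
    else ((-1 : ℝ), 0, 0)
  else liftCurve μ1 μ2 ((1 + x 2 : ℝ) : ℂ) ((x 0 : ℂ) + (x 1 : ℂ) * Complex.I)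

/-- Wirtinger derivative ∂f/∂z̄ = ½(∂_{x₁} + i ∂_{x₂})f. -/
def wd (f : ℂ → ℂ) (z : ℂ) : ℂ :=
  (1 / 2 : ℂ) * (fderiv ℝ f z 1 + Complex.I * fderiv ℝ f z Complex.I)

/-- Surface (2-dimensional Hausdorff) measure on ℝ³. -/
def surf : Measure E3 := Measure.hausdorffMeasure 2

/-! Write `ω = (ω₀, ω₁, ω₂)`, homogeneously extended, and `z = x₀ + i x₁`. Along a meridian `ω₁`
and `ω₂` solve second-order linear ODEs with real coefficients. The weighted Wronskian of a solution
with its conjugate is constant and vanishes at the pole, so each is a real function times a fixed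
phase. By equivariance `ω₁` and `z̄ ω₂` have the same weight, hence for a suitable constant `κ ≠ 0`
they satisfy `Re (ω₁ · conj (z̄ κ ω₂)) = 0` everywhere, and `(0, z̄ κ ω₂, 0)` is tangent to the
target sphere along `ω`.

Take `X = (0, z̄ N, 0)` with `N = χ κ ω₂` and `χ` a radial cutoff. Since `z̄` is harmonic and
`N` has weight `m = 2`, integrating by parts with `Δω₂ = -e ω₂`, `e = |∇ω|²`, turns the second
variation into `-∫ (|z|² χ Δχ + (2m - 2) χ²) |κ ω₂|²`. A cutoff varying slowly enough in
`log ‖x‖` has `χ + |z|² Δχ ≥ 0`, so this is at most `-∫ |N|² < 0`. -/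

section Calculus

open InnerProductSpace Laplacian

variable {ι F : Type*} [NormedAddCommGroup F] [NormedSpace ℝ F]

theorem fderiv_coord [Finite ι] (i : ι) (x : EuclideanSpace ℝ ι) :
    fderiv ℝ (fun y : EuclideanSpace ℝ ι => y i) x = EuclideanSpace.proj i := by
  have := Fintype.ofFinite ι
  exact (EuclideanSpace.proj (𝕜 := ℝ) i).fderiv

theorem fderiv_fderiv_apply_const {E : Type*} [NormedAddCommGroup E] [NormedSpace ℝ E] {f : E → F}
    {x : E} (hf : ContDiffAt ℝ 2 f x) (v w : E) :
    fderiv ℝ (fun y => fderiv ℝ f y v) x w = fderiv ℝ (fderiv ℝ f) x w v := by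
  have hd : DifferentiableAt ℝ (fderiv ℝ f) x :=
    (hf.fderiv_right (m := 1) le_rfl).differentiableAt one_ne_zero
  rw [fderiv_clm_apply hd (differentiableAt_const v)]
  simp

theorem laplacian_eq_sum_fderiv_fderiv [Fintype ι] {E : Type*} [NormedAddCommGroup E]
    [InnerProductSpace ℝ E] [FiniteDimensional ℝ E] (f : E → F) (b : OrthonormalBasis ι ℝ E)
    (x : E) : Δ f x = ∑ i, fderiv ℝ (fderiv ℝ f) x (b i) (b i) := by
  simp [laplacian_eq_iteratedFDeriv_orthonormalBasis f b, iteratedFDeriv_two_apply]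

theorem continuous_laplacian {E : Type*} [NormedAddCommGroup E] [InnerProductSpace ℝ E]
    [FiniteDimensional ℝ E] {f : E → F} (hf : ContDiff ℝ 2 f) : Continuous (Δ f) := by
  have : Continuous (fderiv ℝ (fderiv ℝ f)) :=
    (hf.fderiv_right (m := 1) le_rfl).continuous_fderiv one_ne_zero
  rw [funext (laplacian_eq_sum_fderiv_fderiv f (stdOrthonormalBasis ℝ E))]
  fun_prop

variable [DecidableEq ι]

/-- The `i`-th partial derivative `∂ᵢf`, as a function on Euclidean space. -/
def pderiv (i : ι) (f : EuclideanSpace ℝ ι → F) (x : EuclideanSpace ℝ ι) : F :=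
  fderiv ℝ f x (EuclideanSpace.single i 1)

theorem hasCompactSupport_pderiv {f : EuclideanSpace ℝ ι → F} (hf : HasCompactSupport f) (i : ι) :
    HasCompactSupport (pderiv i f) :=
  hf.fderiv_apply ℝ (EuclideanSpace.single i 1)

variable {𝕜 : Type*} [NontriviallyNormedField 𝕜] [NormedAlgebra ℝ 𝕜] [NormedSpace 𝕜 F]
  [IsScalarTower ℝ 𝕜 F]

theorem pderiv_smul [Finite ι] {c : EuclideanSpace ℝ ι → 𝕜} {f : EuclideanSpace ℝ ι → F}
    {x : EuclideanSpace ℝ ι} (hc : DifferentiableAt ℝ c x) (hf : DifferentiableAt ℝ f x) (i : ι) :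
    pderiv i (c • f) x = c x • pderiv i f x + pderiv i c x • f x := by
  have := Fintype.ofFinite ι
  simp [pderiv, fderiv_smul hc hf]

theorem pderiv_coord_mul [Finite ι] {f : EuclideanSpace ℝ ι → ℝ} {x : EuclideanSpace ℝ ι}
    (hf : DifferentiableAt ℝ f x) (i : ι) :
    pderiv i (fun y => y i * f y) x = f x + x i * pderiv i f x := by
  have := Fintype.ofFinite ι
  refine (pderiv_smul (c := fun y : EuclideanSpace ℝ ι => y i) (by fun_prop) hf i).trans ?_
  simp [pderiv, fderiv_coord, add_comm]

variable [Fintype ι]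

theorem fderiv_eq_sum_pderiv (f : EuclideanSpace ℝ ι → F) (x v : EuclideanSpace ℝ ι) :
    fderiv ℝ f x v = ∑ i, v i • pderiv i f x := by
  conv_lhs => rw [← (EuclideanSpace.basisFun ι ℝ).sum_repr v]
  simp [pderiv]

theorem contDiffAt_pderiv {f : EuclideanSpace ℝ ι → F} {x : EuclideanSpace ℝ ι} {m n : WithTop ℕ∞}
    (hf : ContDiffAt ℝ n f x) (hmn : m + 1 ≤ n) (i : ι) : ContDiffAt ℝ m (pderiv i f) x :=
  (hf.fderiv_right hmn).clm_apply contDiffAt_const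

theorem contDiff_pderiv {f : EuclideanSpace ℝ ι → F} {m n : WithTop ℕ∞} (hf : ContDiff ℝ n f)
    (hmn : m + 1 ≤ n) (i : ι) : ContDiff ℝ m (pderiv i f) :=
  contDiff_iff_contDiffAt.2 fun _ => contDiffAt_pderiv hf.contDiffAt hmn i

theorem laplacian_eq_sum_pderiv {f : EuclideanSpace ℝ ι → F} {x : EuclideanSpace ℝ ι}
    (hf : ContDiffAt ℝ 2 f x) : Δ f x = ∑ i, pderiv i (pderiv i f) x := by
  rw [laplacian_eq_sum_fderiv_fderiv f (EuclideanSpace.basisFun ι ℝ)]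
  simp only [EuclideanSpace.basisFun_apply]
  exact Finset.sum_congr rfl fun i _ => (fderiv_fderiv_apply_const hf _ _).symm

theorem laplacian_smul_of_contDiffAt {c : EuclideanSpace ℝ ι → 𝕜} {f : EuclideanSpace ℝ ι → F}
    {x : EuclideanSpace ℝ ι} (hc : ContDiffAt ℝ 2 c x) (hf : ContDiffAt ℝ 2 f x) :
    Δ (c • f) x =
      c x • Δ f x + (2 : ℝ) • ∑ i, pderiv i c x • pderiv i f x + Δ c x • f x := by
  have second (i : ι) : pderiv i (pderiv i (c • f)) x = c x • pderiv i (pderiv i f) x +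
      (2 : ℝ) • pderiv i c x • pderiv i f x + pderiv i (pderiv i c) x • f x := by
    have first : pderiv i (c • f) =ᶠ[nhds x] c • pderiv i f + pderiv i c • f := by
      filter_upwards [hc.eventually (by simp), hf.eventually (by simp)] with y hcy hfy
      exact pderiv_smul (hcy.differentiableAt two_ne_zero) (hfy.differentiableAt two_ne_zero) i
    have dc := hc.differentiableAt two_ne_zero
    have df := hf.differentiableAt two_ne_zero
    have dpc := (contDiffAt_pderiv hc (m := 1) le_rfl i).differentiableAt one_ne_zero
    have dpf := (contDiffAt_pderiv hf (m := 1) le_rfl i).differentiableAt one_ne_zero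
    calc pderiv i (pderiv i (c • f)) x
        = pderiv i (c • pderiv i f) x + pderiv i (pderiv i c • f) x := by
          simp only [pderiv, first.fderiv_eq]
          rw [fderiv_add (dc.smul dpf) (dpc.smul df)]; rfl
      _ = _ := by
          rw [pderiv_smul dc dpf, pderiv_smul dpc df, two_smul]
          abel
  rw [laplacian_eq_sum_pderiv (hc.smul hf), laplacian_eq_sum_pderiv hc, laplacian_eq_sum_pderiv hf]
  simp only [second, Finset.sum_add_distrib, Finset.smul_sum, Finset.sum_smul]

end Calculus

section IntegrationByParts

open InnerProductSpace Laplacian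

variable {ι : Type*} [Fintype ι] [DecidableEq ι]

theorem integral_inner_pderiv_pderiv {H : Type*} [NormedAddCommGroup H] [InnerProductSpace ℝ H]
    {f : EuclideanSpace ℝ ι → H} (hf : ContDiff ℝ 2 f) (hc : HasCompactSupport f) (i : ι) :
    ∫ x, ⟪f x, pderiv i (pderiv i f) x⟫_ℝ = -∫ x, ‖pderiv i f x‖ ^ 2 := by
  have hf' : ContDiff ℝ 1 (pderiv i f) := contDiff_pderiv hf le_rfl i
  have hf'' : Continuous (pderiv i (pderiv i f)) :=
    (contDiff_pderiv (m := 0) hf' le_rfl i).continuous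
  have inner_support {g : EuclideanSpace ℝ ι → H} : HasCompactSupport fun x => ⟪f x, g x⟫_ℝ :=
    hc.mono fun x hx hfx => hx (by simp [hfx])
  have parts := integral_bilinear_fderiv_right_eq_neg_left_of_integrable (μ := volume)
    (f := f) (g := pderiv i f) (v := EuclideanSpace.single i 1) (B := innerSL ℝ)
    ((hf'.continuous.inner hf'.continuous).integrable_of_hasCompactSupport
      ((hasCompactSupport_pderiv hc i).mono fun x hx hfx => hx (by simp [hfx])))
    ((hf.continuous.inner hf'').integrable_of_hasCompactSupport inner_support)
    ((hf.continuous.inner hf'.continuous).integrable_of_hasCompactSupport inner_support)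
    (fun x _ => hf.contDiffAt.differentiableAt two_ne_zero)
    (fun x _ => hf'.contDiffAt.differentiableAt one_ne_zero)
  simp only [← real_inner_self_eq_norm_sq]
  exact parts

theorem integral_sum_norm_pderiv_sq {H : Type*} [NormedAddCommGroup H] [InnerProductSpace ℝ H]
    {f : EuclideanSpace ℝ ι → H} (hf : ContDiff ℝ 2 f) (hc : HasCompactSupport f) :
    ∫ x, ∑ i, ‖pderiv i f x‖ ^ 2 = -∫ x, ⟪f x, Δ f x⟫_ℝ := by
  have hf' (i : ι) : ContDiff ℝ 1 (pderiv i f) := contDiff_pderiv hf le_rfl i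
  have hf'' (i : ι) : Continuous (pderiv i (pderiv i f)) :=
    (contDiff_pderiv (m := 0) (hf' i) le_rfl i).continuous
  have int_sq (i : ι) : Integrable fun x => ‖pderiv i f x‖ ^ 2 :=
    ((hf' i).continuous.norm.pow 2).integrable_of_hasCompactSupport
      ((hasCompactSupport_pderiv hc i).mono fun x hx hfx => hx (by simp [hfx]))
  have int_inner (i : ι) : Integrable fun x => ⟪f x, pderiv i (pderiv i f) x⟫_ℝ :=
    (hf.continuous.inner (hf'' i)).integrable_of_hasCompactSupport
      (hc.mono fun x hx hfx => hx (by simp [hfx]))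
  simp only [laplacian_eq_sum_pderiv hf.contDiffAt, inner_sum]
  rw [integral_finsetSum _ fun i _ => int_sq i, integral_finsetSum _ fun i _ => int_inner i]
  simp only [integral_inner_pderiv_pderiv hf hc, Finset.sum_neg_distrib, neg_neg]

theorem integral_coord_mul_pderiv {f : EuclideanSpace ℝ ι → ℝ} (hf : ContDiff ℝ 1 f)
    (hc : HasCompactSupport f) (i : ι) : ∫ x, x i * pderiv i f x = -∫ x, f x := by
  have : Continuous (pderiv i f) := (contDiff_pderiv (m := 0) hf le_rfl i).continuous
  have parts := integral_mul_fderiv_eq_neg_fderiv_mul_of_integrable (μ := volume)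
    (f := fun x : EuclideanSpace ℝ ι => x i) (g := f) (v := EuclideanSpace.single i 1)
    (by simpa [fderiv_coord] using hf.continuous.integrable_of_hasCompactSupport hc)
    (Continuous.integrable_of_hasCompactSupport (by fun_prop)
      (hasCompactSupport_pderiv hc i).mul_left)
    (Continuous.integrable_of_hasCompactSupport (by fun_prop) hc.mul_left)
    (fun x _ => by fun_prop)
    (fun x _ => hf.contDiffAt.differentiableAt one_ne_zero)
  exact parts.trans (by simp [fderiv_coord])

end IntegrationByParts

section Cutoff

/-- A profile `exp (-1 / (1 - (s / 100) ^ 2))` on `(-100, 100)`, extended by zero; it varies so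
slowly that `p + p' + p''` stays nonnegative. -/
def cutoffProfile (s : ℝ) : ℝ := expNegInvGlue (1 - (s / 100) ^ 2)

open InnerProductSpace Laplacian

theorem contDiff_cutoffProfile {n : ℕ∞} : ContDiff ℝ n cutoffProfile :=
  expNegInvGlue.contDiff.comp (by fun_prop)

theorem hasCompactSupport_cutoffProfile : HasCompactSupport cutoffProfile := by
  refine HasCompactSupport.intro (isCompact_Icc (a := -100) (b := 100)) fun s hs => ?_
  refine expNegInvGlue.zero_of_nonpos ?_
  rw [Set.mem_Icc, ← abs_le, not_le] at hs
  rw [div_pow, ← sq_abs]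
  have : (100 : ℝ) ^ 2 ≤ |s| ^ 2 := by gcongr
  linarith

theorem cutoffProfile_nonneg (s : ℝ) : 0 ≤ cutoffProfile s := expNegInvGlue.nonneg _

theorem cutoffProfile_zero_pos : 0 < cutoffProfile 0 := expNegInvGlue.pos_of_pos (by norm_num)

theorem hasDerivAt_expNegInvGlue (u : ℝ) :
    HasDerivAt expNegInvGlue (u⁻¹ ^ 2 * expNegInvGlue u) u := by
  simpa using expNegInvGlue.hasDerivAt_polynomial_eval_inv_mul 1 u

open Polynomial in
theorem hasDerivAt_inv_sq_mul_expNegInvGlue (u : ℝ) :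
    HasDerivAt (fun u => u⁻¹ ^ 2 * expNegInvGlue u)
      ((u⁻¹ ^ 4 - 2 * u⁻¹ ^ 3) * expNegInvGlue u) u := by
  have h := expNegInvGlue.hasDerivAt_polynomial_eval_inv_mul (X ^ 2) u
  simp only [eval_pow, eval_X] at h
  refine h.congr_deriv ?_
  simp only [derivative_X_pow, eval_mul, eval_sub, eval_pow, eval_X, eval_C, Nat.cast_ofNat,
    Nat.add_one_sub_one, pow_one]
  ring

theorem hasDerivAt_one_sub_sq_div (s : ℝ) :
    HasDerivAt (fun s : ℝ => 1 - (s / 100) ^ 2) (-(s / 5000)) s := by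
  refine ((((hasDerivAt_id s).div_const 100).fun_pow 2).const_sub 1).congr_deriv ?_
  simp only [Nat.cast_ofNat, id_eq, Nat.add_one_sub_one, pow_one, one_div]
  ring

theorem deriv_cutoffProfile (s : ℝ) : deriv cutoffProfile s =
    (1 - (s / 100) ^ 2)⁻¹ ^ 2 * cutoffProfile s * -(s / 5000) :=
  ((hasDerivAt_expNegInvGlue _).comp s (hasDerivAt_one_sub_sq_div s)).deriv

theorem deriv_deriv_cutoffProfile (s : ℝ) : deriv (deriv cutoffProfile) s =
    ((1 - (s / 100) ^ 2)⁻¹ ^ 4 - 2 * (1 - (s / 100) ^ 2)⁻¹ ^ 3) * cutoffProfile s * (s / 5000) ^ 2 -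
      (1 - (s / 100) ^ 2)⁻¹ ^ 2 * cutoffProfile s / 5000 := by
  have h := ((hasDerivAt_inv_sq_mul_expNegInvGlue _).comp s (hasDerivAt_one_sub_sq_div s)).mul
    ((hasDerivAt_id s).div_const 5000).neg
  rw [funext deriv_cutoffProfile]
  refine Eq.trans h.deriv ?_
  simp only [cutoffProfile, Function.comp_apply, Pi.neg_apply, id]
  ring

theorem cutoffProfile_add_derivs_nonneg (s : ℝ) :
    0 ≤ cutoffProfile s + deriv cutoffProfile s + deriv (deriv cutoffProfile) s := by
  obtain ⟨w, hw⟩ : ∃ w, w = 1 - (s / 100) ^ 2 := ⟨_, rfl⟩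
  rw [deriv_cutoffProfile, deriv_deriv_cutoffProfile, cutoffProfile, ← hw]
  rcases le_or_gt w 0 with h | h
  · simp [expNegInvGlue.zero_of_nonpos h]
  have factor : expNegInvGlue w + w⁻¹ ^ 2 * expNegInvGlue w * -(s / 5000) +
      ((w⁻¹ ^ 4 - 2 * w⁻¹ ^ 3) * expNegInvGlue w * (s / 5000) ^ 2 -
        w⁻¹ ^ 2 * expNegInvGlue w / 5000) =
      expNegInvGlue w / w ^ 4 *
        (w ^ 4 - w ^ 2 * (s + 1) / 5000 + (1 - 2 * w) * (1 - w) / 2500) := by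
    rw [show (s / 5000) ^ 2 = (1 - w) / 2500 by rw [hw]; ring]
    field_simp
    ring
  rw [factor]
  refine mul_nonneg (div_nonneg (expNegInvGlue.nonneg w) (by positivity)) ?_
  have hs : s ≤ 100 := by nlinarith
  have : w ≤ 1 := by rw [hw]; nlinarith [sq_nonneg s]
  have hws : w ^ 2 * (s + 1) ≤ w ^ 2 * 101 := by gcongr; linarith
  nlinarith [sq_nonneg (w ^ 2 - 1 / 25), sq_nonneg (w - 1 / 5)]

theorem hasFDerivAt_log_norm {E : Type*} [NormedAddCommGroup E] [InnerProductSpace ℝ E] {x : E}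
    (hx : x ≠ 0) : HasFDerivAt (fun y : E => Real.log ‖y‖) ((‖x‖ ^ 2)⁻¹ • innerSL ℝ x) x := by
  have half_log : (fun y : E => Real.log ‖y‖) = fun y => (1 / 2 : ℝ) * Real.log (‖y‖ ^ 2) := by
    ext y
    simp
  rw [half_log]
  refine (((hasStrictFDerivAt_norm_sq x).hasFDerivAt.log (by positivity)).const_mul
    (1 / 2 : ℝ)).congr_fderiv ?_
  ext y
  simp only [one_div, smul_apply, coe_innerSL_apply, nsmul_eq_mul, Nat.cast_ofNat,
    smul_eq_mul]
  ring

variable {ι : Type*} [Fintype ι]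

/-- The radial function `p (log ‖x‖)`, set to `0` at the origin, where `Real.log 0 = 0` is junk. -/
def logRadial (p : ℝ → ℝ) : EuclideanSpace ℝ ι → ℝ :=
  Set.indicator {0}ᶜ fun x => p (Real.log ‖x‖)

theorem logRadial_apply (p : ℝ → ℝ) {x : EuclideanSpace ℝ ι} (hx : x ≠ 0) :
    logRadial p x = p (Real.log ‖x‖) :=
  Set.indicator_of_mem hx _

theorem logRadial_eventuallyEq (p : ℝ → ℝ) {x : EuclideanSpace ℝ ι} (hx : x ≠ 0) :
    logRadial p =ᶠ[nhds x] fun y => p (Real.log ‖y‖) := by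
  filter_upwards [isOpen_ne.mem_nhds hx] with y hy using logRadial_apply p hy

theorem contDiffAt_logRadial {p : ℝ → ℝ} {n : WithTop ℕ∞} (hp : ContDiff ℝ n p)
    {x : EuclideanSpace ℝ ι} (hx : x ≠ 0) : ContDiffAt ℝ n (logRadial p) x :=
  (hp.contDiffAt.comp x ((contDiffAt_norm ℝ hx).log (norm_ne_zero_iff.2 hx))).congr_of_eventuallyEq
    (logRadial_eventuallyEq p hx)

theorem tsupport_logRadial_subset {p : ℝ → ℝ} (hp : HasCompactSupport p) :
    ∃ r > 0, ∃ R, tsupport (logRadial p : EuclideanSpace ℝ ι → ℝ) ⊆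
      {x | r ≤ ‖x‖} ∩ Metric.closedBall 0 R := by
  obtain ⟨B, hB⟩ := hp.isBounded.exists_norm_le
  refine ⟨Real.exp (-B), Real.exp_pos _, Real.exp B, closure_minimal (fun x hx => ?_)
    ((isClosed_le continuous_const continuous_norm).inter Metric.isClosed_closedBall)⟩
  have hx0 : x ≠ 0 := fun h => hx (by simp [logRadial, h])
  have hlog : |Real.log ‖x‖| ≤ B :=
    hB _ (subset_tsupport p fun h => hx (by rw [logRadial_apply p hx0, h]))
  have hpos := norm_pos_iff.2 hx0
  exact ⟨(Real.le_log_iff_exp_le hpos).1 (abs_le.1 hlog).1,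
    mem_closedBall_zero_iff.2 ((Real.log_le_iff_le_exp hpos).1 (abs_le.1 hlog).2)⟩

theorem zero_notMem_tsupport_logRadial {p : ℝ → ℝ} (hp : HasCompactSupport p) :
    (0 : EuclideanSpace ℝ ι) ∉ tsupport (logRadial p) := by
  obtain ⟨r, hr, R, hsub⟩ := tsupport_logRadial_subset (ι := ι) hp
  intro h0
  exact hr.not_ge (by simpa using (hsub h0).1)

theorem hasCompactSupport_logRadial {p : ℝ → ℝ} (hp : HasCompactSupport p) :
    HasCompactSupport (logRadial p : EuclideanSpace ℝ ι → ℝ) := by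
  obtain ⟨r, -, R, hsub⟩ := tsupport_logRadial_subset (ι := ι) hp
  exact (isCompact_closedBall 0 R).of_isClosed_subset (isClosed_tsupport _)
    (hsub.trans Set.inter_subset_right)

theorem pderiv_logRadial [DecidableEq ι] {p : ℝ → ℝ} (hp : Differentiable ℝ p)
    {x : EuclideanSpace ℝ ι} (hx : x ≠ 0) (i : ι) :
    pderiv i (logRadial p) x = x i * (deriv p (Real.log ‖x‖) / ‖x‖ ^ 2) := by
  have hcomp := (hp (Real.log ‖x‖)).hasDerivAt.comp_hasFDerivAt x (hasFDerivAt_log_norm hx)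
  rw [pderiv, (logRadial_eventuallyEq p hx).fderiv_eq]
  refine (congrArg (fun L => L (EuclideanSpace.single i 1)) hcomp.fderiv).trans ?_
  simp only [smul_apply, coe_innerSL_apply, EuclideanSpace.inner_single_right,
    Real.ringHom_apply, one_mul, smul_eq_mul]
  ring

theorem laplacian_logRadial {p : ℝ → ℝ} (hp : ContDiff ℝ 2 p) {x : EuclideanSpace ℝ ι}
    (hx : x ≠ 0) :
    (Δ (logRadial p : EuclideanSpace ℝ ι → ℝ)) x = (deriv (deriv p) (Real.log ‖x‖) +
      (Fintype.card ι - 2) * deriv p (Real.log ‖x‖)) / ‖x‖ ^ 2 := by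
  set q : ℝ → ℝ := fun s => deriv p s / Real.exp s ^ 2
  have hp' : ContDiff ℝ 1 (deriv p) := ((contDiff_succ_iff_deriv (n := 1)).1 hp).2.2
  have hq (s : ℝ) : HasDerivAt q ((deriv (deriv p) s - 2 * deriv p s) / Real.exp s ^ 2) s := by
    refine (((hp'.differentiable one_ne_zero s).hasDerivAt).div ((Real.hasDerivAt_exp s).fun_pow 2)
      (by positivity)).congr_deriv ?_
    field_simp
    ring
  have q_log {y : EuclideanSpace ℝ ι} (hy : y ≠ 0) :
      q (Real.log ‖y‖) = deriv p (Real.log ‖y‖) / ‖y‖ ^ 2 := by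
    simp only [q, Real.exp_log (norm_pos_iff.2 hy)]
  have first (i : ι) : pderiv i (logRadial p) =ᶠ[nhds x]
      fun y : EuclideanSpace ℝ ι => y i * logRadial q y := by
    filter_upwards [isOpen_ne.mem_nhds hx] with y hy
    rw [pderiv_logRadial (hp.differentiable two_ne_zero) hy, logRadial_apply q hy, q_log hy]
  have second (i : ι) : pderiv i (pderiv i (logRadial p)) x =
      deriv p (Real.log ‖x‖) / ‖x‖ ^ 2 + x i ^ 2 *
        ((deriv (deriv p) (Real.log ‖x‖) - 2 * deriv p (Real.log ‖x‖)) / ‖x‖ ^ 4) := by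
    have hqC : ContDiff ℝ 1 q := hp'.div (Real.contDiff_exp.pow 2) fun s => by positivity
    rw [pderiv, (first i).fderiv_eq, ← pderiv, pderiv_coord_mul
      ((contDiffAt_logRadial hqC hx).differentiableAt one_ne_zero), pderiv_logRadial
      (fun s => (hq s).differentiableAt) hx, logRadial_apply q hx, (hq _).deriv, q_log hx,
      Real.exp_log (norm_pos_iff.2 hx)]
    ring
  rw [laplacian_eq_sum_pderiv (contDiffAt_logRadial hp hx)]
  simp only [second, Finset.sum_add_distrib, ← Finset.sum_mul, ← EuclideanSpace.real_norm_sq_eq]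
  have hr := norm_ne_zero_iff.2 hx
  simp only [Finset.sum_const, Finset.card_univ, nsmul_eq_mul]
  field_simp
  ring

end Cutoff

section LinearODE

theorem eq_zero_of_hasDerivAt_linear {E : Type*} [NormedAddCommGroup E] [NormedSpace ℝ E]
    {a b t₀ : ℝ} {A : ℝ → E →L[ℝ] E} (hA : ContinuousOn A (Set.Ioo a b)) {y : ℝ → E}
    (hy : ∀ t ∈ Set.Ioo a b, HasDerivAt y (A t (y t)) t) (ht₀ : t₀ ∈ Set.Ioo a b)
    (hy₀ : y t₀ = 0) {t : ℝ} (ht : t ∈ Set.Ioo a b) : y t = 0 := by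
  obtain ⟨a', haa', ha'⟩ := exists_between (lt_min ht₀.1 ht.1)
  obtain ⟨b', hb', hbb'⟩ := exists_between (max_lt ht₀.2 ht.2)
  have hsub : Set.Icc a' b' ⊆ Set.Ioo a b := Set.Icc_subset_Ioo haa' hbb'
  obtain ⟨K, hK⟩ := isCompact_Icc.exists_bound_of_continuousOn (hA.mono hsub)
  have lipschitz (s : ℝ) (hs : s ∈ Set.Ioo a' b') :
      LipschitzOnWith K.toNNReal (fun x => A s x) Set.univ :=
    ((A s).lipschitz.weaken (by
      rw [← norm_toNNReal]
      exact Real.toNNReal_le_toNNReal (hK s (Set.Ioo_subset_Icc_self hs)))).lipschitzOnWith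
  have unique := ODE_solution_unique_of_mem_Ioo (g := fun _ => (0 : E)) lipschitz
    ⟨ha'.trans_le (min_le_left _ _), (le_max_left _ _).trans_lt hb'⟩
    (fun s hs => ⟨hy s (hsub (Set.Ioo_subset_Icc_self hs)), Set.mem_univ _⟩)
    (fun s _ => ⟨by simpa using hasDerivAt_const s (0 : E), Set.mem_univ _⟩) hy₀
  exact unique ⟨ha'.trans_le (min_le_right _ _), (le_max_right _ _).trans_lt hb'⟩

variable {a b : ℝ} {p q : ℝ → ℝ}

theorem eq_zero_of_hasDerivAt_system (hp : ContinuousOn p (Set.Ioo a b))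
    (hq : ContinuousOn q (Set.Ioo a b)) {u v : ℝ → ℝ}
    (hu : ∀ t ∈ Set.Ioo a b, HasDerivAt u (p t * v t) t)
    (hv : ∀ t ∈ Set.Ioo a b, HasDerivAt v (q t * u t) t) {t₀ : ℝ} (ht₀ : t₀ ∈ Set.Ioo a b)
    (hu₀ : u t₀ = 0) (hv₀ : v t₀ = 0) {t : ℝ} (ht : t ∈ Set.Ioo a b) : u t = 0 := by
  let A (s : ℝ) : ℝ × ℝ →L[ℝ] ℝ × ℝ :=
    p s • (ContinuousLinearMap.inl ℝ ℝ ℝ ∘L ContinuousLinearMap.snd ℝ ℝ ℝ) +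
      q s • (ContinuousLinearMap.inr ℝ ℝ ℝ ∘L ContinuousLinearMap.fst ℝ ℝ ℝ)
  have hA : ContinuousOn A (Set.Ioo a b) :=
    (hp.smul continuousOn_const).add (hq.smul continuousOn_const)
  refine congrArg Prod.fst (eq_zero_of_hasDerivAt_linear (y := fun s => (u s, v s)) hA
    (fun s hs => ?_) ht₀ (by simp [hu₀, hv₀]) ht)
  simpa [A] using (hu s hs).prodMk (hv s hs)

theorem im_conj_mul_eq_zero_of_hasDerivAt_system {u v : ℝ → ℂ}
    (hu : ∀ t ∈ Set.Ioo a b, HasDerivAt u (p t * v t) t)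
    (hv : ∀ t ∈ Set.Ioo a b, HasDerivAt v (q t * u t) t)
    (hu_cont : ContinuousOn u (Set.Ico a b)) (hv_cont : ContinuousOn v (Set.Ico a b))
    (hva : v a = 0) {t : ℝ} (ht : t ∈ Set.Ioo a b) :
    ((starRingEnd ℂ) (u t) * v t).im = 0 := by
  have deriv_zero (s : ℝ) (hs : s ∈ Set.Ioo a t) :
      HasDerivAt (fun s => ((starRingEnd ℂ) (u s) * v s).im) 0 s := by
    have hs' : s ∈ Set.Ioo a b := ⟨hs.1, hs.2.trans ht.2⟩
    refine (Complex.imCLM.hasFDerivAt.comp_hasDerivAt s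
      (((hu s hs').star).mul (hv s hs'))).congr_deriv ?_
    simp only [star_mul', RCLike.star_def, Complex.imCLM_apply, Complex.add_im, Complex.mul_im,
      Complex.mul_re, Complex.ofReal_re, Complex.conj_re, Complex.ofReal_im, Complex.conj_im]
    ring
  have hsub : Set.Icc a t ⊆ Set.Ico a b := Set.Icc_subset_Ico_right ht.2
  obtain ⟨s, -, hs⟩ := exists_hasDerivAt_eq_slope _ _ ht.1
    (Complex.continuous_im.comp_continuousOn
      ((Complex.continuous_conj.comp_continuousOn (hu_cont.mono hsub)).mul (hv_cont.mono hsub)))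
    deriv_zero
  have hne : t - a ≠ 0 := (sub_pos.2 ht.1).ne'
  simpa [hva, hne] using eq_div_iff hne |>.1 hs |>.symm

theorem exists_ne_zero_im_mul_eq_zero {v w : ℂ} (h : ((starRingEnd ℂ) v * w).im = 0) :
    ∃ k : ℂ, k ≠ 0 ∧ (k * v).im = 0 ∧ (k * w).im = 0 := by
  rcases eq_or_ne v 0 with rfl | hv
  · rcases eq_or_ne w 0 with rfl | hw
    · exact ⟨1, by simp⟩
    · exact ⟨(starRingEnd ℂ) w, by simpa using hw, by simp, by simp [mul_comm]⟩
  · exact ⟨(starRingEnd ℂ) v, by simpa using hv, by simp [mul_comm], h⟩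

/- The Wronskian-type quantity `Im (ū v)` is conserved and vanishes at `a`, so `u` and `v` point in
one real direction at an interior time, and uniqueness propagates this to the whole interval. -/
theorem exists_ne_zero_forall_im_mul_eq_zero (hab : a < b) (hp : ContinuousOn p (Set.Ioo a b))
    (hq : ContinuousOn q (Set.Ioo a b)) {u v : ℝ → ℂ}
    (hu : ∀ t ∈ Set.Ioo a b, HasDerivAt u (p t * v t) t)
    (hv : ∀ t ∈ Set.Ioo a b, HasDerivAt v (q t * u t) t)
    (hu_cont : ContinuousOn u (Set.Ico a b)) (hv_cont : ContinuousOn v (Set.Ico a b))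
    (hva : v a = 0) : ∃ k : ℂ, k ≠ 0 ∧ ∀ t ∈ Set.Ioo a b, (k * u t).im = 0 := by
  obtain ⟨t₀, ht₀⟩ := Set.nonempty_Ioo.2 hab
  obtain ⟨k, hk, hku, hkv⟩ := exists_ne_zero_im_mul_eq_zero
    (im_conj_mul_eq_zero_of_hasDerivAt_system hu hv hu_cont hv_cont hva ht₀)
  refine ⟨k, hk, fun t ht => eq_zero_of_hasDerivAt_system (u := fun s => (k * u s).im)
    (v := fun s => (k * v s).im) hp hq (fun s hs => ?_) (fun s hs => ?_) ht₀ hku hkv ht⟩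
  · refine (Complex.imCLM.hasFDerivAt.comp_hasDerivAt s ((hu s hs).const_mul k)).congr_deriv ?_
    simp only [Complex.imCLM_apply, Complex.mul_im, Complex.ofReal_re, Complex.ofReal_im, zero_mul,
      add_zero, Complex.mul_re, sub_zero]
    ring
  · refine (Complex.imCLM.hasFDerivAt.comp_hasDerivAt s ((hv s hs).const_mul k)).congr_deriv ?_
    simp only [Complex.imCLM_apply, Complex.mul_im, Complex.ofReal_re, Complex.ofReal_im, zero_mul,
      add_zero, Complex.mul_re, sub_zero]
    ring

end LinearODE

section Equivariance

open InnerProductSpace Laplacian Topology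
open scoped ContDiff

theorem fderiv_fderiv_apply_clm {E G : Type*} [NormedAddCommGroup E] [NormedSpace ℝ E]
    [NormedAddCommGroup G] [NormedSpace ℝ G] {f : E → G} {x : E} (hf : ContDiffAt ℝ 2 f x)
    (A : E →L[ℝ] E) (v : E) :
    fderiv ℝ (fun y => fderiv ℝ f y (A y)) x v =
      fderiv ℝ (fderiv ℝ f) x v (A x) + fderiv ℝ f x (A v) := by
  have hd : DifferentiableAt ℝ (fderiv ℝ f) x :=
    (hf.fderiv_right (m := 1) le_rfl).differentiableAt one_ne_zero
  rw [fderiv_clm_apply hd A.differentiableAt, A.fderiv]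
  simp [add_comm]

/-- The complex coordinate `x₀ + i x₁` of the plane rotated by `rot3`. -/
def planeCoord : E3 →L[ℝ] ℂ :=
  Complex.equivRealProdCLM.symm.toContinuousLinearMap ∘L
    (EuclideanSpace.proj (0 : Fin 3)).prod (EuclideanSpace.proj 1)

theorem planeCoord_apply (x : E3) : planeCoord x = ⟨x 0, x 1⟩ := by
  simp [planeCoord, Complex.ext_iff]

/-- The infinitesimal generator `x₀ ∂₁ - x₁ ∂₀` of `rot3`. -/
def rotGenerator : E3 →L[ℝ] E3 :=
  (EuclideanSpace.proj (0 : Fin 3)).smulRight (EuclideanSpace.single 1 (1 : ℝ)) -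
    (EuclideanSpace.proj (1 : Fin 3)).smulRight (EuclideanSpace.single 0 (1 : ℝ))

theorem rotGenerator_apply (x : E3) : rotGenerator x =
    x 0 • EuclideanSpace.single 1 (1 : ℝ) - x 1 • EuclideanSpace.single 0 (1 : ℝ) := by
  simp [rotGenerator]

theorem rot3_apply (α : ℝ) (x : E3) : rot3 α x =
    !₂[Real.cos α * x 0 - Real.sin α * x 1, Real.sin α * x 0 + Real.cos α * x 1, x 2] := by
  ext i
  fin_cases i <;> simp [rot3]

theorem rot3_eq (α : ℝ) (x : E3) :
    rot3 α x = Real.cos α • !₂[x 0, x 1, 0] + Real.sin α • !₂[-x 1, x 0, 0] + !₂[0, 0, x 2] := by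
  ext i
  fin_cases i <;> simp [rot3, sub_eq_add_neg, add_comm]

theorem hasDerivAt_rot3_zero (x : E3) : HasDerivAt (fun α => rot3 α x) (rotGenerator x) 0 := by
  have hcos : HasDerivAt Real.cos 0 0 := by simpa using Real.hasDerivAt_cos 0
  have hsin : HasDerivAt Real.sin 1 0 := by simpa using Real.hasDerivAt_sin 0
  simp only [rot3_eq]
  refine (((hcos.smul_const _).add (hsin.smul_const _)).add_const _).congr_deriv ?_
  ext i
  fin_cases i <;> simp [rotGenerator_apply]

theorem planeCoord_rot3 (α : ℝ) (x : E3) :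
    planeCoord (rot3 α x) = Complex.exp (Complex.I * α) * planeCoord x := by
  rw [mul_comm Complex.I]
  apply Complex.ext <;>
    simp [planeCoord_apply, rot3_apply, Complex.exp_ofReal_mul_I_re, Complex.exp_ofReal_mul_I_im]
  ring

theorem norm_rot3 (α : ℝ) (x : E3) : ‖rot3 α x‖ = ‖x‖ := by
  simp only [EuclideanSpace.norm_eq, Fin.sum_univ_three, rot3_apply, Real.norm_eq_abs, sq_abs]
  congr 1
  simp only [Fin.isValue, Matrix.cons_val_zero, Matrix.cons_val_one, Matrix.cons_val]
  linear_combination (x 0 ^ 2 + x 1 ^ 2) * Real.cos_sq_add_sin_sq α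

/-- `F` has weight `m`: rotating the argument by `α` multiplies the value by `exp (i m α)`. The
origin is exempt because degree-zero homogeneous extensions carry no information there. -/
def HasWeight (m : ℕ) (F : E3 → ℂ) : Prop :=
  ∀ (α : ℝ) (x : E3), x ≠ 0 → F (rot3 α x) = Complex.exp (m * Complex.I * α) * F x

/-- Multiplication by `x₀ - i x₁`, which lowers the weight by one. -/
def lowerWeight (N : E3 → ℂ) (x : E3) : ℂ := (starRingEnd ℂ) (planeCoord x) * N x

theorem hasWeight_lowerWeight {m : ℕ} {N : E3 → ℂ} (hN : HasWeight (m + 1) N) :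
    HasWeight m (lowerWeight N) := by
  intro α x hx
  have phase : (starRingEnd ℂ) (Complex.exp (Complex.I * α)) *
      Complex.exp ((m + 1 : ℕ) * Complex.I * α) = Complex.exp (m * Complex.I * α) := by
    rw [← Complex.exp_conj, ← Complex.exp_add, map_mul, Complex.conj_I, Complex.conj_ofReal]
    push_cast
    ring_nf
  rw [lowerWeight, lowerWeight, hN α x hx, planeCoord_rot3, map_mul, ← phase]
  ring

theorem HasWeight.fderiv_rotGenerator {m : ℕ} {F : E3 → ℂ} (hF : HasWeight m F) {x : E3}
    (hx : x ≠ 0) (hd : DifferentiableAt ℝ F x) :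
    fderiv ℝ F x (rotGenerator x) = m * Complex.I * F x := by
  have rot_zero : rot3 0 x = x := by
    ext i
    fin_cases i <;> simp [rot3_apply]
  have along_orbit : HasDerivAt (fun α => F (rot3 α x)) (fderiv ℝ F x (rotGenerator x)) 0 := by
    exact hd.hasFDerivAt.comp_hasDerivAt_of_eq 0 (hasDerivAt_rot3_zero x) rot_zero.symm
  have phase : HasDerivAt (fun α : ℝ => Complex.exp (m * Complex.I * α) * F x)
      (m * Complex.I * F x) 0 := by
    simpa using ((Complex.ofRealCLM.hasDerivAt.const_mul (m * Complex.I)).cexp).mul_const (F x)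
      (x := (0 : ℝ))
  rw [← funext fun α => hF α x hx] at phase
  exact along_orbit.unique phase

/-- A complex component of a degree-zero homogeneous equivariant tangent map with energy density
`e`: it is smooth off the origin, homogeneous of degree zero, of weight `m`, and solves the linear
equation `ΔF = -eF`. -/
structure IsTangentComponent (m : ℕ) (e : E3 → ℝ) (F : E3 → ℂ) : Prop where
  contDiffAt : ∀ x ≠ 0, ContDiffAt ℝ ∞ F x
  homogeneous : ∀ c : ℝ, 0 < c → ∀ x, F (c • x) = F x
  hasWeight : HasWeight m F
  laplacian_eq : ∀ x ≠ 0, Δ F x = -(e x • F x)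

namespace IsTangentComponent

variable {m : ℕ} {e : E3 → ℝ} {F : E3 → ℂ} {x : E3}

theorem const_mul (hF : IsTangentComponent m e F) (k : ℂ) :
    IsTangentComponent m e (k • F) where
  contDiffAt x hx := contDiffAt_const.smul (hF.contDiffAt x hx)
  homogeneous c hc x := by simp [hF.homogeneous c hc x]
  hasWeight α x hx := by simp [hF.hasWeight α x hx, mul_left_comm]
  laplacian_eq x hx := by
    rw [laplacian_smul k ((hF.contDiffAt x hx).of_le ENat.LEInfty.out), hF.laplacian_eq x hx]
    simp [mul_left_comm]

theorem contDiffAt_two (hF : IsTangentComponent m e F) (hx : x ≠ 0) : ContDiffAt ℝ 2 F x :=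
  (hF.contDiffAt x hx).of_le ENat.LEInfty.out

theorem differentiableAt (hF : IsTangentComponent m e F) (hx : x ≠ 0) : DifferentiableAt ℝ F x :=
  (hF.contDiffAt x hx).differentiableAt (by simp)

theorem fderiv_self (hF : IsTangentComponent m e F) (hx : x ≠ 0) : fderiv ℝ F x x = 0 := by
  have radial : HasDerivAt (fun c : ℝ => F (c • x)) (fderiv ℝ F x x) 1 := by
    have h := (hasDerivAt_id (1 : ℝ)).smul_const x
    simp only [one_smul, id] at h
    exact (hF.differentiableAt hx).hasFDerivAt.comp_hasDerivAt_of_eq 1 h (one_smul ℝ x).symm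
  refine radial.unique ((hasDerivAt_const 1 (F x)).congr_of_eventuallyEq ?_)
  filter_upwards [lt_mem_nhds one_pos] with c hc using hF.homogeneous c hc x

theorem fderiv_fderiv_self (hF : IsTangentComponent m e F) (hx : x ≠ 0) (v : E3) :
    fderiv ℝ (fderiv ℝ F) x v x = -fderiv ℝ F x v := by
  have euler : (fun y => fderiv ℝ F y y) =ᶠ[𝓝 x] fun _ => 0 := by
    filter_upwards [isOpen_ne.mem_nhds hx] with y hy using hF.fderiv_self hy
  have h := fderiv_fderiv_apply_clm (hF.contDiffAt_two hx) (.id ℝ E3) v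
  simp only [ContinuousLinearMap.id_apply, euler.fderiv_eq, fderiv_fun_const, Pi.zero_apply,
    zero_apply] at h
  exact eq_neg_of_add_eq_zero_left h.symm

theorem fderiv_fderiv_rotGenerator (hF : IsTangentComponent m e F) (hx : x ≠ 0) (v : E3) :
    fderiv ℝ (fderiv ℝ F) x v (rotGenerator x) + fderiv ℝ F x (rotGenerator v) =
      m * Complex.I * fderiv ℝ F x v := by
  have orbit : (fun y => fderiv ℝ F y (rotGenerator y)) =ᶠ[𝓝 x] fun y => m * Complex.I * F y := by
    filter_upwards [isOpen_ne.mem_nhds hx] with y hy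
      using hF.hasWeight.fderiv_rotGenerator hy (hF.differentiableAt hy)
  rw [← fderiv_fderiv_apply_clm (hF.contDiffAt_two hx), orbit.fderiv_eq,
    fderiv_const_mul (hF.differentiableAt hx)]
  simp

end IsTangentComponent

end Equivariance

section Phase

open InnerProductSpace Laplacian Topology
open scoped ContDiff

/-- The unit-speed meridian `θ ↦ (sin θ, 0, cos θ)` of the unit sphere. -/
def meridian (θ : ℝ) : E3 :=
  Real.sin θ • EuclideanSpace.single 0 1 + Real.cos θ • EuclideanSpace.single 2 1

theorem hasDerivAt_meridian (θ : ℝ) :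
    HasDerivAt meridian (meridian (θ + Real.pi / 2)) θ := by
  refine (((Real.hasDerivAt_sin θ).smul_const _).add
    ((Real.hasDerivAt_cos θ).smul_const _)).congr_deriv ?_
  simp [meridian, Real.sin_add_pi_div_two, Real.cos_add_pi_div_two]

theorem continuous_meridian : Continuous meridian :=
  continuous_iff_continuousAt.2 fun θ => (hasDerivAt_meridian θ).continuousAt

theorem meridian_add_pi (θ : ℝ) : meridian (θ + Real.pi) = -meridian θ := by
  simp [meridian, Real.sin_add_pi, Real.cos_add_pi, add_comm]

theorem hasDerivAt_meridian_add_pi_div_two (θ : ℝ) :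
    HasDerivAt (fun τ => meridian (τ + Real.pi / 2)) (-meridian θ) θ := by
  refine ((hasDerivAt_meridian (θ + Real.pi / 2)).comp_add_const θ (Real.pi / 2)).congr_deriv ?_
  rw [add_assoc, add_halves, meridian_add_pi]

theorem orthonormal_meridian (θ : ℝ) : Orthonormal ℝ
    ![meridian θ, meridian (θ + Real.pi / 2), EuclideanSpace.single 1 (1 : ℝ)] := by
  rw [orthonormal_iff_ite]
  intro i j
  fin_cases i <;> fin_cases j <;>
    simp [meridian, PiLp.inner_apply, Fin.sum_univ_three, Real.sin_add_pi_div_two,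
      Real.cos_add_pi_div_two, mul_comm, ← sq, -inner_self_eq_norm_sq_to_K]

theorem meridian_ne_zero (θ : ℝ) : meridian θ ≠ 0 := (orthonormal_meridian θ).ne_zero 0

theorem laplacian_meridian (F : E3 → ℂ) (θ : ℝ) : Δ F (meridian θ) =
    fderiv ℝ (fderiv ℝ F) (meridian θ) (meridian θ) (meridian θ) +
    fderiv ℝ (fderiv ℝ F) (meridian θ) (meridian (θ + Real.pi / 2)) (meridian (θ + Real.pi / 2)) +
    fderiv ℝ (fderiv ℝ F) (meridian θ) (EuclideanSpace.single 1 1)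
      (EuclideanSpace.single 1 1) := by
  have hon := orthonormal_meridian θ
  rw [laplacian_eq_sum_fderiv_fderiv F
    (OrthonormalBasis.mk hon (hon.linearIndependent.span_eq_top_of_card_eq_finrank (by simp)).ge)]
  simp [Fin.sum_univ_three]

theorem rotGenerator_meridian (θ : ℝ) :
    rotGenerator (meridian θ) = Real.sin θ • EuclideanSpace.single 1 1 := by
  simp [rotGenerator_apply, meridian]

theorem sin_smul_meridian_add_cos_smul_meridian (θ : ℝ) :
    Real.sin θ • meridian θ + Real.cos θ • meridian (θ + Real.pi / 2) =
      EuclideanSpace.single 0 1 := by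
  ext i
  fin_cases i <;>
    simp [meridian, Real.sin_add_pi_div_two, Real.cos_add_pi_div_two, ← sq, mul_comm]

theorem exists_rot3_smul_meridian {x : E3} (hx : planeCoord x ≠ 0) :
    ∃ α R θ : ℝ, 0 < R ∧ θ ∈ Set.Ioo 0 Real.pi ∧ x = rot3 α (R • meridian θ) := by
  set z := planeCoord x with hz
  have hz_pos : 0 < ‖z‖ := norm_pos_iff.2 hx
  set w : ℂ := ⟨x 2, ‖z‖⟩
  have hR : 0 < ‖w‖ := norm_pos_iff.2 fun h => hz_pos.ne' (congrArg Complex.im h)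
  refine ⟨z.arg, ‖w‖, w.arg, hR,
    ⟨(Complex.arg_nonneg_iff.2 hz_pos.le).lt_of_ne fun h => ?_, (Complex.arg_lt_pi_iff.2 ?_)⟩, ?_⟩
  · exact hz_pos.ne' (Complex.arg_eq_zero_iff.1 h.symm).2
  · exact Or.inr hz_pos.ne'
  · have hw_im : ‖w‖ * Real.sin w.arg = ‖z‖ := Complex.norm_mul_sin_arg w
    have hw_re : ‖w‖ * Real.cos w.arg = x 2 := Complex.norm_mul_cos_arg w
    have hz_im : ‖z‖ * Real.sin z.arg = x 1 := by
      simp [Complex.norm_mul_sin_arg, hz, planeCoord_apply]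
    have hz_re : ‖z‖ * Real.cos z.arg = x 0 := by
      simp [Complex.norm_mul_cos_arg, hz, planeCoord_apply]
    ext i
    fin_cases i <;> simp [rot3_apply, meridian, hw_im, hw_re, ← hz_im, ← hz_re, mul_comm]

namespace IsTangentComponent

variable {m : ℕ} {e : E3 → ℝ} {F : E3 → ℂ}

theorem sin_sq_mul_fderiv_fderiv (hF : IsTangentComponent m e F) (θ : ℝ) :
    (Real.sin θ : ℂ) ^ 2 * fderiv ℝ (fderiv ℝ F) (meridian θ) (EuclideanSpace.single 1 1)
        (EuclideanSpace.single 1 1) =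
      Real.sin θ * Real.cos θ * fderiv ℝ F (meridian θ) (meridian (θ + Real.pi / 2)) -
        m ^ 2 * F (meridian θ) := by
  have hγ := meridian_ne_zero θ
  have angular := hF.hasWeight.fderiv_rotGenerator hγ (hF.differentiableAt hγ)
  have angular_deriv := hF.fderiv_fderiv_rotGenerator hγ (EuclideanSpace.single 1 1)
  have generator_axis : rotGenerator (EuclideanSpace.single 1 1) =
      -(Real.sin θ • meridian θ + Real.cos θ • meridian (θ + Real.pi / 2)) := by
    rw [sin_smul_meridian_add_cos_smul_meridian]
    simp [rotGenerator_apply]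
  rw [rotGenerator_meridian] at angular angular_deriv
  simp only [generator_axis, map_neg, map_add, map_smul, hF.fderiv_self hγ, smul_zero, zero_add,
    Complex.real_smul] at angular angular_deriv
  linear_combination Real.sin θ * angular_deriv + m * Complex.I * angular +
    m ^ 2 * F (meridian θ) * Complex.I_sq

theorem hasDerivAt_comp_meridian (hF : IsTangentComponent m e F) (θ : ℝ) :
    HasDerivAt (fun τ => F (meridian τ))
      (fderiv ℝ F (meridian θ) (meridian (θ + Real.pi / 2))) θ :=
  (hF.differentiableAt (meridian_ne_zero θ)).hasFDerivAt.comp_hasDerivAt θ (hasDerivAt_meridian θ)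

theorem hasDerivAt_fderiv_comp_meridian (hF : IsTangentComponent m e F) (θ : ℝ) :
    HasDerivAt (fun τ => fderiv ℝ F (meridian τ) (meridian (τ + Real.pi / 2)))
      (fderiv ℝ (fderiv ℝ F) (meridian θ) (meridian (θ + Real.pi / 2))
        (meridian (θ + Real.pi / 2))) θ := by
  have hγ := meridian_ne_zero θ
  have hd : DifferentiableAt ℝ (fderiv ℝ F) (meridian θ) :=
    ((hF.contDiffAt_two hγ).fderiv_right (m := 1) le_rfl).differentiableAt one_ne_zero
  refine ((hd.hasFDerivAt.comp_hasDerivAt θ (hasDerivAt_meridian θ)).clm_apply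
    (hasDerivAt_meridian_add_pi_div_two θ)).congr_deriv ?_
  simp [hF.fderiv_self hγ]

theorem hasDerivAt_sin_mul_fderiv_comp_meridian (hF : IsTangentComponent m e F) {θ : ℝ}
    (hθ : Real.sin θ ≠ 0) :
    HasDerivAt (fun τ : ℝ =>
        (Real.sin τ : ℂ) * fderiv ℝ F (meridian τ) (meridian (τ + Real.pi / 2)))
      (((m ^ 2 / Real.sin θ - e (meridian θ) * Real.sin θ : ℝ) : ℂ) * F (meridian θ)) θ := by
  have hγ := meridian_ne_zero θ
  refine ((Real.hasDerivAt_sin θ).ofReal_comp.mul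
    (hF.hasDerivAt_fderiv_comp_meridian θ)).congr_deriv ?_
  have laplacian_eq := laplacian_meridian F θ
  rw [hF.laplacian_eq _ hγ, hF.fderiv_fderiv_self hγ, hF.fderiv_self hγ,
    Complex.real_smul] at laplacian_eq
  have angular := hF.sin_sq_mul_fderiv_fderiv θ
  have hθ' : (Real.sin θ : ℂ) ≠ 0 := mod_cast hθ
  generalize meridian (θ + Real.pi / 2) = γ' at laplacian_eq angular ⊢
  push_cast at hθ' angular ⊢
  field_simp
  linear_combination -Complex.sin θ ^ 2 * laplacian_eq - angular

theorem exists_ne_zero_forall_im_mul_meridian_eq_zero (hF : IsTangentComponent m e F)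
    (he : ContinuousOn e {0}ᶜ) :
    ∃ k : ℂ, k ≠ 0 ∧ ∀ θ ∈ Set.Ioo 0 Real.pi, (k * F (meridian θ)).im = 0 := by
  have hsin : ∀ θ ∈ Set.Ioo 0 Real.pi, Real.sin θ ≠ 0 :=
    fun θ hθ => (Real.sin_pos_of_mem_Ioo hθ).ne'
  have he_meridian : Continuous fun θ => e (meridian θ) :=
    he.comp_continuous continuous_meridian meridian_ne_zero
  refine exists_ne_zero_forall_im_mul_eq_zero (p := fun θ => (Real.sin θ)⁻¹)
    (q := fun θ => m ^ 2 / Real.sin θ - e (meridian θ) * Real.sin θ)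
    (v := fun θ => Real.sin θ * fderiv ℝ F (meridian θ) (meridian (θ + Real.pi / 2)))
    Real.pi_pos (Real.continuousOn_sin.inv₀ hsin)
    ((continuousOn_const.div Real.continuousOn_sin hsin).sub
      (he_meridian.mul Real.continuous_sin).continuousOn)
    (fun θ hθ => ?_) (fun θ hθ => hF.hasDerivAt_sin_mul_fderiv_comp_meridian (hsin θ hθ))
    (fun θ _ => (hF.hasDerivAt_comp_meridian θ).continuousAt.continuousWithinAt)
    (fun θ _ => ?_) (by simp)
  · refine (hF.hasDerivAt_comp_meridian θ).congr_deriv ?_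
    rw [← mul_assoc, ← Complex.ofReal_mul, inv_mul_cancel₀ (hsin θ hθ), Complex.ofReal_one, one_mul]
  · exact (((Real.hasDerivAt_sin θ).ofReal_comp).continuousAt.mul
      (hF.hasDerivAt_fderiv_comp_meridian θ).continuousAt).continuousWithinAt

theorem exists_ne_zero_forall_im_mul_conj_pow_eq_zero (hF : IsTangentComponent m e F)
    (he : ContinuousOn e {0}ᶜ) :
    ∃ k : ℂ, k ≠ 0 ∧ ∀ x, planeCoord x ≠ 0 →
      (k * F x * (starRingEnd ℂ) (planeCoord x) ^ m).im = 0 := by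
  obtain ⟨k, hk, real_meridian⟩ := hF.exists_ne_zero_forall_im_mul_meridian_eq_zero he
  refine ⟨k, hk, fun x hx => ?_⟩
  obtain ⟨α, R, θ, hR, hθ, rfl⟩ := exists_rot3_smul_meridian hx
  have hplane : planeCoord (R • meridian θ) = ((R * Real.sin θ : ℝ) : ℂ) := by
    simp [planeCoord_apply, meridian, Complex.ext_iff, Complex.sin_ofReal_re]
  have cancel : Complex.exp (m * Complex.I * α) *
      (starRingEnd ℂ) (Complex.exp (Complex.I * α)) ^ m = 1 := by
    rw [← Complex.exp_conj, ← Complex.exp_nat_mul, ← Complex.exp_add]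
    simp [mul_assoc]
  have split : k * F (rot3 α (R • meridian θ)) *
      (starRingEnd ℂ) (planeCoord (rot3 α (R • meridian θ))) ^ m =
      (((R * Real.sin θ) ^ m : ℝ) : ℂ) * (k * F (meridian θ)) := by
    rw [hF.hasWeight α _ (smul_ne_zero hR.ne' (meridian_ne_zero θ)), hF.homogeneous R hR,
      planeCoord_rot3, hplane, map_mul, mul_pow, Complex.conj_ofReal, Complex.ofReal_pow]
    linear_combination k * F (meridian θ) * ((R * Real.sin θ : ℝ) : ℂ) ^ m * cancel
  rw [split, Complex.im_ofReal_mul, real_meridian θ hθ, mul_zero]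

theorem exists_ne_zero_forall_re_mul_conj_eq_zero {G : E3 → ℂ} (hG : IsTangentComponent m e G)
    (hF : IsTangentComponent (m + 1) e F) (he : ContinuousOn e {0}ᶜ) :
    ∃ κ : ℂ, κ ≠ 0 ∧ ∀ x, (G x * (starRingEnd ℂ) (lowerWeight (κ • F) x)).re = 0 := by
  obtain ⟨k, hk, hkG⟩ := hG.exists_ne_zero_forall_im_mul_conj_pow_eq_zero he
  obtain ⟨l, hl, hlF⟩ := hF.exists_ne_zero_forall_im_mul_conj_pow_eq_zero he
  refine ⟨-Complex.I * (starRingEnd ℂ) k * l, by simp [hk, hl], fun x => ?_⟩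
  set z := planeCoord x
  rcases eq_or_ne z 0 with hz0 | hz0
  · simp [lowerWeight, z, hz0]
  have hnorm : Complex.normSq z ^ m ≠ 0 := pow_ne_zero m (Complex.normSq_eq_zero.not.2 hz0)
  refine (mul_eq_zero_iff_left hnorm).1 ?_
  have rotate : ((Complex.normSq z ^ m : ℝ) : ℂ) * (G x * (starRingEnd ℂ)
      (lowerWeight ((-Complex.I * (starRingEnd ℂ) k * l) • F) x)) =
      Complex.I * ((k * G x * (starRingEnd ℂ) z ^ m) *
        (starRingEnd ℂ) (l * F x * (starRingEnd ℂ) z ^ (m + 1))) := by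
    simp only [lowerWeight, Pi.smul_apply, smul_eq_mul, Complex.ofReal_pow,
      Complex.normSq_eq_conj_mul_self, map_mul, map_neg, map_pow, Complex.conj_conj, Complex.conj_I]
    ring
  rw [← Complex.re_ofReal_mul, rotate, Complex.I_mul_re, Complex.mul_im, Complex.conj_im,
    hkG x hz0, hlF x hz0]
  simp

end IsTangentComponent

end Phase

section Energy

open InnerProductSpace Laplacian Topology
open scoped ContDiff

variable {m : ℕ} {N : E3 → ℂ} {x : E3}

/-- The real-linear map `x ↦ x₀ - i x₁`. -/
def conjPlaneCoord : E3 →L[ℝ] ℂ := Complex.conjCLE.toContinuousLinearMap ∘L planeCoord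

theorem conjPlaneCoord_apply (x : E3) :
    conjPlaneCoord x = (starRingEnd ℂ) (planeCoord x) := rfl

theorem lowerWeight_eq_smul (N : E3 → ℂ) : lowerWeight N = ⇑conjPlaneCoord • N := rfl

theorem pderiv_conjPlaneCoord (i : Fin 3) :
    pderiv i conjPlaneCoord = Function.const E3 (![1, -Complex.I, 0] i) := by
  ext1 x
  rw [pderiv, conjPlaneCoord.fderiv]
  fin_cases i <;> simp [conjPlaneCoord_apply, planeCoord_apply, Complex.ext_iff]

theorem laplacian_conjPlaneCoord (x : E3) : (Δ (conjPlaneCoord : E3 → ℂ)) x = 0 := by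
  rw [laplacian_eq_sum_pderiv conjPlaneCoord.contDiff.contDiffAt]
  simp [pderiv_conjPlaneCoord, pderiv]

theorem laplacian_lowerWeight (hN : ContDiffAt ℝ 2 N x) :
    Δ (lowerWeight N) x = (starRingEnd ℂ) (planeCoord x) * Δ N x +
      2 * (pderiv 0 N x - Complex.I * pderiv 1 N x) := by
  rw [lowerWeight_eq_smul,
    laplacian_smul_of_contDiffAt conjPlaneCoord.contDiff.contDiffAt hN, laplacian_conjPlaneCoord]
  simp only [conjPlaneCoord_apply, smul_eq_mul, pderiv_conjPlaneCoord, Function.const_apply,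
    Fin.sum_univ_three, Matrix.cons_val_zero, Matrix.cons_val_one, Matrix.cons_val, zero_mul,
    add_zero, Complex.real_smul, Complex.ofReal_ofNat]
  ring

theorem HasWeight.planeCoord_mul_sub (hw : HasWeight m N) (hx : x ≠ 0)
    (hd : DifferentiableAt ℝ N x) :
    planeCoord x * (pderiv 0 N x - Complex.I * pderiv 1 N x) =
      x 0 * pderiv 0 N x + x 1 * pderiv 1 N x + m * N x := by
  have generator := hw.fderiv_rotGenerator hx hd
  rw [rotGenerator_apply, map_sub, map_smul, map_smul] at generator
  simp only [Complex.real_smul] at generator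
  have hz : planeCoord x = x 0 + x 1 * Complex.I := by simp [planeCoord_apply, Complex.ext_iff]
  simp only [pderiv, hz]
  linear_combination -Complex.I * generator - (x 1 * fderiv ℝ N x (EuclideanSpace.single 1 1) +
    m * N x) * Complex.I_sq

theorem pderiv_norm_sq {ι H : Type*} [Finite ι] [DecidableEq ι] [NormedAddCommGroup H]
    [InnerProductSpace ℝ H] {f : EuclideanSpace ℝ ι → H} {x : EuclideanSpace ℝ ι}
    (hf : DifferentiableAt ℝ f x) (i : ι) :
    pderiv i (fun y => ‖f y‖ ^ 2) x = 2 * ⟪f x, pderiv i f x⟫_ℝ := by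
  have := Fintype.ofFinite ι
  simp [pderiv, (hf.hasFDerivAt.norm_sq).fderiv]

theorem HasWeight.inner_laplacian_lowerWeight (hw : HasWeight m N) (hx : x ≠ 0)
    (hN : ContDiffAt ℝ 2 N x) :
    ⟪lowerWeight N x, Δ (lowerWeight N) x⟫_ℝ =
      ‖planeCoord x‖ ^ 2 * ⟪N x, Δ N x⟫_ℝ + 2 * m * ‖N x‖ ^ 2 +
        x 0 * pderiv 0 (fun y => ‖N y‖ ^ 2) x + x 1 * pderiv 1 (fun y => ‖N y‖ ^ 2) x := by
  have hd := hN.differentiableAt two_ne_zero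
  have expand : Δ (lowerWeight N) x * (starRingEnd ℂ) (lowerWeight N x) =
      ((‖planeCoord x‖ ^ 2 : ℝ) : ℂ) * (Δ N x * (starRingEnd ℂ) (N x)) +
      ((2 * m * ‖N x‖ ^ 2 : ℝ) : ℂ) +
      ((2 * x 0 : ℝ) : ℂ) * (pderiv 0 N x * (starRingEnd ℂ) (N x)) +
      ((2 * x 1 : ℝ) : ℂ) * (pderiv 1 N x * (starRingEnd ℂ) (N x)) := by
    rw [laplacian_lowerWeight hN, lowerWeight, map_mul, Complex.conj_conj]
    push_cast
    rw [← Complex.mul_conj', ← Complex.mul_conj']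
    linear_combination 2 * (starRingEnd ℂ) (N x) * hw.planeCoord_mul_sub hx hd
  simp only [pderiv_norm_sq hd, Complex.inner, expand, Complex.add_re, Complex.re_ofReal_mul,
    Complex.ofReal_re]
  ring

theorem contDiff_lowerWeight {n : WithTop ℕ∞} (hN : ContDiff ℝ n N) :
    ContDiff ℝ n (lowerWeight N) :=
  conjPlaneCoord.contDiff.smul hN

theorem tsupport_lowerWeight_subset (N : E3 → ℂ) : tsupport (lowerWeight N) ⊆ tsupport N :=
  tsupport_smul_subset_right conjPlaneCoord N

theorem norm_lowerWeight (N : E3 → ℂ) (x : E3) : ‖lowerWeight N x‖ = ‖planeCoord x‖ * ‖N x‖ := by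
  simp [lowerWeight]

theorem hasCompactSupport_lowerWeight (hc : HasCompactSupport N) :
    HasCompactSupport (lowerWeight N) := hc.mul_left

theorem integrable_norm_sq (hN : Continuous N) (hc : HasCompactSupport N) :
    Integrable fun x => ‖N x‖ ^ 2 :=
  (hN.norm.pow 2).integrable_of_hasCompactSupport (hc.mono fun x hx hNx => hx (by simp [hNx]))

theorem integrable_planeCoord_sq_mul_inner_laplacian_add (hN : ContDiff ℝ 2 N)
    (hc : HasCompactSupport N) (c : ℝ) :
    Integrable fun x => ‖planeCoord x‖ ^ 2 * ⟪N x, Δ N x⟫_ℝ + c * ‖N x‖ ^ 2 :=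
  Continuous.integrable_of_hasCompactSupport
    (((planeCoord.continuous.norm.pow 2).mul (hN.continuous.inner (continuous_laplacian hN))).add
      (continuous_const.mul (hN.continuous.norm.pow 2)))
    (hc.mono fun x hx hNx => hx (by simp [hNx]))

theorem HasWeight.integral_sum_norm_pderiv_lowerWeight_sq (hw : HasWeight m N)
    (hN : ContDiff ℝ 2 N) (hc : HasCompactSupport N) :
    ∫ x, ∑ i, ‖pderiv i (lowerWeight N) x‖ ^ 2 =
      -∫ x, (‖planeCoord x‖ ^ 2 * ⟪N x, Δ N x⟫_ℝ + (2 * m - 2) * ‖N x‖ ^ 2) := by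
  have hsq : ContDiff ℝ 1 fun x => ‖N x‖ ^ 2 := (hN.of_le one_le_two).norm_sq ℝ
  have hsq_supp : HasCompactSupport fun x => ‖N x‖ ^ 2 :=
    hc.mono fun x hx hNx => hx (by simp [hNx])
  let base (x : E3) : ℝ := ‖planeCoord x‖ ^ 2 * ⟪N x, Δ N x⟫_ℝ + 2 * m * ‖N x‖ ^ 2
  let radial (i : Fin 3) (x : E3) : ℝ := x i * pderiv i (fun y => ‖N y‖ ^ 2) x
  have int_base : Integrable base := integrable_planeCoord_sq_mul_inner_laplacian_add hN hc _
  have int_radial (i : Fin 3) : Integrable (radial i) :=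
    Continuous.integrable_of_hasCompactSupport
      (by have := (contDiff_pderiv (m := 0) hsq le_rfl i).continuous; fun_prop)
      (hasCompactSupport_pderiv hsq_supp i).mul_left
  have density : (fun x => ⟪lowerWeight N x, Δ (lowerWeight N) x⟫_ℝ) =ᵐ[volume]
      base + radial 0 + radial 1 :=
    (Measure.ae_ne volume (0 : E3)).mono fun x hx => hw.inner_laplacian_lowerWeight hx hN.contDiffAt
  calc ∫ x, ∑ i, ‖pderiv i (lowerWeight N) x‖ ^ 2
      = -((∫ x, base x) - 2 * ∫ x, ‖N x‖ ^ 2) := by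
        rw [integral_sum_norm_pderiv_sq (contDiff_lowerWeight hN)
            (hasCompactSupport_lowerWeight hc), integral_congr_ae density,
          integral_add' (int_base.add (int_radial 0)) (int_radial 1),
          integral_add' int_base (int_radial 0), integral_coord_mul_pderiv hsq hsq_supp,
          integral_coord_mul_pderiv hsq hsq_supp]
        ring
    _ = -∫ x, (base x - 2 * ‖N x‖ ^ 2) := by
        rw [integral_sub int_base ((integrable_norm_sq hN.continuous hc).const_mul 2),
          integral_const_mul]
    _ = _ := by congr with x; simp only [base]; ring

theorem HasWeight.integral_lowerWeight_neg {e : E3 → ℝ} (hw : HasWeight m N)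
    (hN : ContDiff ℝ 2 N) (hc : HasCompactSupport N) (he : Continuous fun x => e x * ‖N x‖ ^ 2)
    (hpos : ∀ x ≠ 0, ‖N x‖ ^ 2 ≤ ‖planeCoord x‖ ^ 2 * ⟪N x, Δ N x + e x • N x⟫_ℝ +
      (2 * m - 2) * ‖N x‖ ^ 2) (hne : N ≠ 0) :
    ∫ x, (∑ i, ‖pderiv i (lowerWeight N) x‖ ^ 2 - e x * ‖lowerWeight N x‖ ^ 2) < 0 := by
  obtain ⟨x₀, hx₀⟩ := Function.ne_iff.1 hne
  have int_grad : Integrable fun x => ∑ i, ‖pderiv i (lowerWeight N) x‖ ^ 2 :=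
    integrable_finsetSum _ fun i _ => integrable_norm_sq
      (contDiff_pderiv (m := 0) (contDiff_lowerWeight (hN.of_le one_le_two)) le_rfl i).continuous
      (hasCompactSupport_pderiv (hasCompactSupport_lowerWeight hc) i)
  have int_pot : Integrable fun x => ‖planeCoord x‖ ^ 2 * (e x * ‖N x‖ ^ 2) :=
    ((planeCoord.continuous.norm.pow 2).mul he).integrable_of_hasCompactSupport
      (hc.mono fun x hx hNx => hx (by simp [hNx]))
  have int_lap := integrable_planeCoord_sq_mul_inner_laplacian_add hN hc (2 * m - 2)
  have mass_pos : 0 < ∫ x, ‖N x‖ ^ 2 :=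
    (hN.continuous.norm.pow 2).integral_pos_of_hasCompactSupport_nonneg_nonzero
      (hc.mono fun x hx hNx => hx (by simp [hNx])) (fun x => sq_nonneg _)
      (pow_ne_zero 2 (norm_ne_zero_iff.2 hx₀))
  calc ∫ x, (∑ i, ‖pderiv i (lowerWeight N) x‖ ^ 2 - e x * ‖lowerWeight N x‖ ^ 2)
      = ∫ x, (∑ i, ‖pderiv i (lowerWeight N) x‖ ^ 2 -
          ‖planeCoord x‖ ^ 2 * (e x * ‖N x‖ ^ 2)) := by
        congr with x; rw [norm_lowerWeight]; ring
    _ = -∫ x, (‖planeCoord x‖ ^ 2 * ⟪N x, Δ N x⟫_ℝ + (2 * m - 2) * ‖N x‖ ^ 2 +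
          ‖planeCoord x‖ ^ 2 * (e x * ‖N x‖ ^ 2)) := by
        rw [integral_sub int_grad int_pot, integral_add int_lap int_pot,
          hw.integral_sum_norm_pderiv_lowerWeight_sq hN hc]
        ring
    _ ≤ -∫ x, ‖N x‖ ^ 2 := by
        refine neg_le_neg (integral_mono_ae (integrable_norm_sq hN.continuous hc)
          (int_lap.add int_pot) ((Measure.ae_ne volume (0 : E3)).mono fun x hx => ?_))
        refine (hpos x hx).trans_eq ?_
        simp only [inner_add_right, real_inner_smul_right, real_inner_self_eq_norm_sq]
        ring
    _ < 0 := neg_neg_of_pos mass_pos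

end Energy

section Localisation

open InnerProductSpace Laplacian Topology
open scoped ContDiff

/-- The map `F` cut off to an annulus: its product with the profile `p` of `log ‖x‖`. -/
def localize (p : ℝ → ℝ) (F : E3 → ℂ) : E3 → ℂ := (logRadial p : E3 → ℝ) • F

theorem localize_apply (p : ℝ → ℝ) (F : E3 → ℂ) (x : E3) :
    localize p F x = logRadial p x • F x := rfl

theorem tsupport_localize_subset {p : ℝ → ℝ} (hp : HasCompactSupport p) (F : E3 → ℂ) :
    tsupport (localize p F) ⊆ {0}ᶜ :=
  Set.subset_compl_singleton_iff.2 fun h =>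
    zero_notMem_tsupport_logRadial hp (tsupport_smul_subset_left (logRadial p) F h)

theorem hasCompactSupport_localize {p : ℝ → ℝ} (hp : HasCompactSupport p) (F : E3 → ℂ) :
    HasCompactSupport (localize p F) := (hasCompactSupport_logRadial hp).smul_right

theorem lowerWeight_localize (p : ℝ → ℝ) (F : E3 → ℂ) (x : E3) :
    lowerWeight (localize p F) x = logRadial p x • lowerWeight F x := by
  simp only [lowerWeight, localize_apply, mul_smul_comm]

theorem norm_planeCoord_le (x : E3) : ‖planeCoord x‖ ≤ ‖x‖ := by
  rw [← sq_le_sq₀ (norm_nonneg _) (norm_nonneg _), EuclideanSpace.real_norm_sq_eq,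
    ← Complex.normSq_eq_norm_sq, planeCoord_apply, Complex.normSq_mk, Fin.sum_univ_three]
  nlinarith [sq_nonneg (x 2)]

theorem logRadial_cutoffProfile_nonneg (x : E3) : 0 ≤ logRadial cutoffProfile x :=
  Set.indicator_nonneg (fun _ _ => cutoffProfile_nonneg _) x

theorem logRadial_cutoffProfile_add_laplacian_nonneg {x : E3} (hx : x ≠ 0) :
    0 ≤ logRadial cutoffProfile x +
      ‖planeCoord x‖ ^ 2 * (Δ (logRadial cutoffProfile : E3 → ℝ)) x := by
  set s := Real.log ‖x‖ with hs
  set σ := ‖planeCoord x‖ ^ 2 / ‖x‖ ^ 2 with hσ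
  have hσ1 : σ ≤ 1 :=
    div_le_one_of_le₀ (pow_le_pow_left₀ (norm_nonneg _) (norm_planeCoord_le x) 2) (sq_nonneg _)
  calc 0 ≤ (1 - σ) * cutoffProfile s + σ * (cutoffProfile s + deriv cutoffProfile s +
        deriv (deriv cutoffProfile) s) :=
        add_nonneg (mul_nonneg (sub_nonneg.2 hσ1) (cutoffProfile_nonneg s))
          (mul_nonneg (by positivity) (cutoffProfile_add_derivs_nonneg s))
    _ = _ := by
        rw [logRadial_apply _ hx, laplacian_logRadial contDiff_cutoffProfile hx, Fintype.card_fin]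
        simp only [hσ, ← hs]
        push_cast
        ring

namespace IsTangentComponent

variable {m : ℕ} {e : E3 → ℝ} {F : E3 → ℂ} {p : ℝ → ℝ} {x : E3}

theorem contDiff_localize (hF : IsTangentComponent m e F) (hp : ContDiff ℝ ∞ p)
    (hpc : HasCompactSupport p) : ContDiff ℝ ∞ (localize p F) := by
  refine contMDiff_iff_contDiff.1 (contMDiff_of_tsupport fun x hx => ?_)
  have hx0 : x ≠ 0 := tsupport_localize_subset hpc F hx
  exact ((contDiffAt_logRadial hp hx0).smul (hF.contDiffAt x hx0)).contMDiffAt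

theorem hasWeight_localize (hF : IsTangentComponent m e F) (p : ℝ → ℝ) :
    HasWeight m (localize p F) := by
  intro α x hx
  have hrot : rot3 α x ≠ 0 := norm_ne_zero_iff.1 (norm_rot3 α x ▸ norm_ne_zero_iff.2 hx)
  simp only [localize_apply, logRadial_apply p hx, logRadial_apply p hrot, norm_rot3,
    hF.hasWeight α x hx, mul_smul_comm]

theorem laplacian_localize (hF : IsTangentComponent m e F) (hp : ContDiff ℝ 2 p)
    (hx : x ≠ 0) : Δ (localize p F) x + e x • localize p F x =
      (Δ (logRadial p : E3 → ℝ)) x • F x := by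
  have cross : ∑ i, pderiv i (logRadial p) x • pderiv i F x = 0 := by
    simp only [pderiv_logRadial (hp.differentiable two_ne_zero) hx, mul_comm (x _), mul_smul,
      ← Finset.smul_sum, ← fderiv_eq_sum_pderiv, hF.fderiv_self hx, smul_zero]
  rw [localize, laplacian_smul_of_contDiffAt (contDiffAt_logRadial hp hx) (hF.contDiffAt_two hx),
    cross, hF.laplacian_eq x hx, Pi.smul_apply', smul_comm (e x)]
  simp

theorem integral_lowerWeight_localize_neg (hF : IsTangentComponent m e F) (hm : 2 ≤ m)
    (he : ContinuousOn e {0}ᶜ) (hFx : ‖x‖ = 1) (hne : F x ≠ 0) :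
    ∫ y, (∑ i, ‖pderiv i (lowerWeight (localize cutoffProfile F)) y‖ ^ 2 -
      e y * ‖lowerWeight (localize cutoffProfile F) y‖ ^ 2) < 0 := by
  have hN : ContDiff ℝ ∞ (localize cutoffProfile F) :=
    hF.contDiff_localize contDiff_cutoffProfile hasCompactSupport_cutoffProfile
  refine (hF.hasWeight_localize cutoffProfile).integral_lowerWeight_neg
    (hN.of_le ENat.LEInfty.out)
    (hasCompactSupport_localize hasCompactSupport_cutoffProfile F) ?_
    (fun y hy => ?_) fun h => ?_
  · have hsupp : Function.support (fun y => e y * ‖localize cutoffProfile F y‖ ^ 2) ⊆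
        Function.support (localize cutoffProfile F) := fun y hy hNy => hy (by simp [hNy])
    exact (he.mul (hN.continuous.norm.pow 2).continuousOn).continuous_of_tsupport_subset
      isOpen_compl_singleton ((closure_mono hsupp).trans
        (tsupport_localize_subset hasCompactSupport_cutoffProfile F))
  · rw [hF.laplacian_localize contDiff_cutoffProfile hy, localize_apply,
      real_inner_smul_left, real_inner_smul_right, real_inner_self_eq_norm_sq, norm_smul, mul_pow,
      Real.norm_eq_abs, sq_abs]
    have hm' : (2 : ℝ) ≤ m := mod_cast hm
    have hχ := logRadial_cutoffProfile_nonneg y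
    have key := mul_nonneg hχ (logRadial_cutoffProfile_add_laplacian_nonneg hy)
    nlinarith [mul_nonneg key (sq_nonneg ‖F y‖), mul_nonneg (sub_nonneg.2 hm')
      (mul_nonneg (sq_nonneg (logRadial cutoffProfile y)) (sq_nonneg ‖F y‖))]
  · have hx : x ≠ 0 := norm_ne_zero_iff.1 (hFx ▸ one_ne_zero)
    have := congrFun h x
    simp [localize_apply, logRadial_apply _ hx, hFx, cutoffProfile_zero_pos.ne', hne] at this

theorem exists_orthogonal_integral_neg {G : E3 → ℂ} (hG : IsTangentComponent m e G)
    (hF : IsTangentComponent (m + 1) e F) (hm : 1 ≤ m) (he : ContinuousOn e {0}ᶜ) (hx : ‖x‖ = 1)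
    (hne : F x ≠ 0) :
    ∃ Y : E3 → ℂ, ContDiff ℝ ∞ Y ∧ HasCompactSupport Y ∧ 0 ∉ tsupport Y ∧ HasWeight m Y ∧
      (∀ y, (G y * (starRingEnd ℂ) (Y y)).re = 0) ∧
      ∫ y, (∑ i, ‖pderiv i Y y‖ ^ 2 - e y * ‖Y y‖ ^ 2) < 0 := by
  obtain ⟨κ, hκ, orthogonal⟩ := hG.exists_ne_zero_forall_re_mul_conj_eq_zero hF he
  have rotated : IsTangentComponent (m + 1) e (κ • F) := hF.const_mul κ
  refine ⟨lowerWeight (localize cutoffProfile (κ • F)),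
    contDiff_lowerWeight
      (rotated.contDiff_localize contDiff_cutoffProfile hasCompactSupport_cutoffProfile),
    hasCompactSupport_lowerWeight
      (hasCompactSupport_localize hasCompactSupport_cutoffProfile _),
    fun h0 => tsupport_localize_subset hasCompactSupport_cutoffProfile _
      (tsupport_lowerWeight_subset _ h0) rfl,
    hasWeight_lowerWeight (rotated.hasWeight_localize _), fun y => ?_,
    rotated.integral_lowerWeight_localize_neg (Nat.succ_le_succ hm) he hx (smul_ne_zero hκ hne)⟩
  rw [lowerWeight_localize, Complex.real_smul, map_mul, Complex.conj_ofReal, mul_left_comm,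
    Complex.re_ofReal_mul]
  exact mul_eq_zero_of_right _ (orthogonal y)

end IsTangentComponent

end Localisation

section HarmonicSphere

open Laplacian

theorem rot3_smul (α c : ℝ) (x : E3) : rot3 α (c • x) = c • rot3 α x := by
  ext i
  fin_cases i <;> simp [rot3_apply] <;> ring

theorem homExt_smul (ω : E3 → V5) {c : ℝ} (hc : 0 < c) (x : E3) :
    homExt ω (c • x) = homExt ω x := by
  rw [homExt, homExt, norm_smul, Real.norm_of_nonneg hc.le, smul_smul, mul_inv_rev, mul_assoc,
    inv_mul_cancel₀ hc.ne', mul_one]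

theorem homExt_of_mem_sphere (ω : E3 → V5) {x : E3} (hx : x ∈ sphere2) : homExt ω x = ω x := by
  rw [homExt, mem_sphere_zero_iff_norm.1 hx, inv_one, one_smul]

theorem EquivariantS.homExt_rot3 {ω : E3 → V5} (hω : EquivariantS ω) (α : ℝ) {x : E3}
    (hx : x ≠ 0) : homExt ω (rot3 α x) = circAct α (homExt ω x) := by
  rw [homExt, norm_rot3, ← rot3_smul]
  exact hω α _ (mem_sphere_zero_iff_norm.2 (norm_smul_inv_norm hx))

theorem lap_eq_laplacian {f : E3 → V5} {x : E3} (hf : ContDiffAt ℝ 2 f x) : lap f x = Δ f x :=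
  (laplacian_eq_sum_pderiv hf).symm

theorem continuousOn_gradSq {f : E3 → V5} {s : Set E3} (hs : IsOpen s) (hf : ContDiffOn ℝ 1 f s) :
    ContinuousOn (gradSq f) s := by
  have hnsq : Continuous nsq := by
    unfold nsq
    fun_prop
  exact continuousOn_finsetSum _ fun i _ => hnsq.comp_continuousOn
    ((hf.continuousOn_fderiv_of_isOpen hs le_rfl).clm_apply continuousOn_const)

theorem IsHarmonicSphere.isTangentComponent {ω : E3 → V5} (hω : IsHarmonicSphere ω)
    (hωeq : EquivariantS ω) (L : V5 →L[ℝ] ℂ) {m : ℕ}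
    (hL : ∀ (α : ℝ) (p : V5), L (circAct α p) = Complex.exp (m * Complex.I * α) * L p) :
    IsTangentComponent m (gradSq (homExt ω)) (L ∘ homExt ω) := by
  have smooth (x : E3) (hx : x ≠ 0) : ContDiffAt ℝ (⊤ : ℕ∞) (homExt ω) x :=
    hω.2.1.contDiffAt (isOpen_ne.mem_nhds hx)
  refine ⟨fun x hx => L.contDiff.contDiffAt.comp x (smooth x hx),
    fun c hc x => congrArg L (homExt_smul ω hc x), fun α x hx => ?_, fun x hx => ?_⟩
  · rw [Function.comp_apply, hωeq.homExt_rot3 α hx, hL, Function.comp_apply]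
  · have h2 : ContDiffAt ℝ 2 (homExt ω) x := (smooth x hx).of_le ENat.LEInfty.out
    rw [h2.laplacian_CLM_comp_left, Function.comp_apply, ← lap_eq_laplacian h2,
      eq_neg_of_add_eq_zero_left (hω.2.2 x hx), map_neg, map_smul, Function.comp_apply]

/-- The vector field with values in the middle summand `0 ⊕ ℂ ⊕ 0` whose component is `Y`. -/
def middleField (Y : E3 → ℂ) (x : E3) : V5 := (0, Y x, 0)

variable {Y : E3 → ℂ}

theorem contDiff_middleField (hY : ContDiff ℝ (⊤ : ℕ∞) Y) : ContDiff ℝ (⊤ : ℕ∞) (middleField Y) :=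
  contDiff_const.prodMk (hY.prodMk contDiff_const)

theorem support_middleField (Y : E3 → ℂ) :
    Function.support (middleField Y) = Function.support Y := by
  ext x
  simp [middleField]

theorem tsupport_middleField (Y : E3 → ℂ) : tsupport (middleField Y) = tsupport Y := by
  rw [tsupport, support_middleField, tsupport]

theorem equivariantV_middleField (hY : HasWeight 1 Y) (hY0 : Y 0 = 0) :
    EquivariantV (middleField Y) := by
  intro α x
  rcases eq_or_ne x 0 with rfl | hx
  · have hrot : rot3 α 0 = 0 := norm_eq_zero.1 (by rw [norm_rot3, norm_zero])
    simp [middleField, circAct, hrot, hY0]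
  · simp [middleField, circAct, hY α x hx]

theorem gradSq_middleField (hY : Differentiable ℝ Y) (x : E3) :
    gradSq (middleField Y) x = ∑ i, ‖pderiv i Y x‖ ^ 2 := by
  have h : HasFDerivAt (middleField Y) _ x := (hasFDerivAt_const (0 : ℝ) x).prodMk
    ((hY x).hasFDerivAt.prodMk (hasFDerivAt_const (0 : ℂ) x))
  simp [gradSq, h.fderiv, nsq, pderiv, Complex.normSq_eq_norm_sq]

theorem secondVar_middleField {w : E3 → V5} (hY : Differentiable ℝ Y)
    (htan : ∀ x, ((w x).2.1 * (starRingEnd ℂ) (Y x)).re = 0) :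
    secondVar w (middleField Y) =
      ∫ x, (∑ i, ‖pderiv i Y x‖ ^ 2 - gradSq w x * ‖Y x‖ ^ 2) := by
  have tangential : tangPart w (middleField Y) = middleField Y := by
    ext1 x
    simp [tangPart, vdot, middleField, htan x]
  simp [secondVar, tangential, gradSq_middleField hY, nsq, middleField, Complex.normSq_eq_norm_sq]

end HarmonicSphere

/-- Instability: a nonconstant S¹-equivariant tangent map whose range is not contained
in the unit sphere of ℝ ⊕ ℂ ⊕ {0} (i.e. ω₂ ≢ 0) admits an S¹-equivariant smooth vector
field, compactly supported away from the origin, with negative second variation. -/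
theorem statement16 (ω : E3 → V5)
    (hω : IsHarmonicSphere ω) (hωeq : EquivariantS ω)
    (hnc : ∃ x ∈ sphere2, ∃ y ∈ sphere2, ω x ≠ ω y)
    (h2 : ∃ x ∈ sphere2, (ω x).2.2 ≠ 0) :
    ∃ X : E3 → V5, ContDiff ℝ (⊤ : ℕ∞) X ∧ HasCompactSupport X ∧
      (0 : E3) ∉ tsupport X ∧ EquivariantV X ∧ secondVar (homExt ω) X < 0 := by
  obtain ⟨x, hx, hx2⟩ := h2
  have comp₁ : IsTangentComponent 1 (gradSq (homExt ω)) fun x => (homExt ω x).2.1 :=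
    hω.isTangentComponent hωeq (.fst ℝ ℂ ℂ ∘L .snd ℝ ℝ (ℂ × ℂ)) fun α p => by simp [circAct]
  have comp₂ : IsTangentComponent 2 (gradSq (homExt ω)) fun x => (homExt ω x).2.2 :=
    hω.isTangentComponent hωeq (.snd ℝ ℂ ℂ ∘L .snd ℝ ℝ (ℂ × ℂ)) fun α p => by simp [circAct]
  have he : ContinuousOn (gradSq (homExt ω)) {0}ᶜ :=
    continuousOn_gradSq isOpen_compl_singleton (hω.2.1.of_le ENat.LEInfty.out)
  obtain ⟨Y, hY, hYc, hY0, hYw, tangential, negative⟩ :=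
    comp₁.exists_orthogonal_integral_neg comp₂ le_rfl he (mem_sphere_zero_iff_norm.1 hx)
      (homExt_of_mem_sphere ω hx ▸ hx2)
  refine ⟨middleField Y, contDiff_middleField hY, hYc.mono (support_middleField Y).subset,
    tsupport_middleField Y ▸ hY0,
    equivariantV_middleField hYw (image_eq_zero_of_notMem_tsupport hY0), ?_⟩
  rwa [secondVar_middleField (hY.differentiable (by simp)) tangential]
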